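/- Let a weighted digraph on n ≥ 1 vertices have all weights satisfying 0 ≤ w i j ≤ 1, with graph Laplacian L. Then the digraph is a complete dominance graph if and only if there exists a permutation σ : Fin n ≃ Fin n such that for every i : Fin n, the 0/1 vector x_i ∈ ℝⁿ defined by x_i(σ k) = 1 for k ≤ i and x_i(σ k) = 0 for k > i satisfies L *ᵥ x_i = (n − 1 − i) • x_i (x_i is an eigenvector of L for the eigenvalue n − 1 − i). -/

import Mathlib

open Matrix Polynomial

/-- The graph Laplacian `L = D - A` of a weighted digraph with weight matrix `w`. -/
def graphLaplacian {n : ℕ} (w : Fin n → Fin n → ℝ) : Matrix (Fin n) (Fin n) ℝ :=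
  Matrix.diagonal (fun i => ∑ j, w i j) - Matrix.of w

/-- The weighted digraph is acyclic: there is no directed cycle. -/
def IsAcyclic {n : ℕ} (w : Fin n → Fin n → ℝ) : Prop :=
  ¬ ∃ (k : ℕ) (x : ℕ → Fin n), 1 ≤ k ∧ x k = x 0 ∧ ∀ t < k, 0 < w (x t) (x (t + 1))

/-- A complete dominance graph: all weights are 0 or 1, for each pair of distinct
vertices exactly one of the two opposite edges has weight 1, and the digraph is
acyclic (an acyclic tournament with unit weights). -/
def IsCompleteDominanceGraph {n : ℕ} (w : Fin n → Fin n → ℝ) : Prop :=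
  (∀ i j, w i j = 0 ∨ w i j = 1) ∧
  (∀ i j : Fin n, i ≠ j → Xor' (w i j = 1) (w j i = 1)) ∧
  IsAcyclic w

/-!
A complete dominance graph is a strict linear order of the vertices with unit weights. The
Laplacian of such a graph has the indicators of the initial segments as eigenvectors. Conversely,
these indicators span the whole space, so the eigenvalue equations determine the Laplacian, and
the Laplacian determines the weights off the diagonal.
-/

section InitialSegments

variable {α ι : Type*}

/-- The 0/1 vector of the initial segment `{v | p v ≤ i}`, where `p v` is the position of `v` in
an ordering; for `p = σ.symm` this is the vector `x_i` of the ordering `σ`. -/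
def initialIndicator (R : Type*) [Zero R] [One R] [LE ι] [DecidableLE ι] (p : α → ι) (i : ι) :
    α → R :=
  fun v => if p v ≤ i then 1 else 0

theorem eq_of_sum_Iic_eq {M : Type*} [AddCancelCommMonoid M] [PartialOrder ι]
    [LocallyFiniteOrderBot ι] [WellFoundedLT ι] {f g : ι → M}
    (h : ∀ i, ∑ k ∈ Finset.Iic i, f k = ∑ k ∈ Finset.Iic i, g k) : f = g := by
  funext i
  induction i using WellFoundedLT.induction with
  | _ i ih =>
    have sum_Iio_eq : ∑ k ∈ Finset.Iio i, f k = ∑ k ∈ Finset.Iio i, g k :=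
      Finset.sum_congr rfl fun k hk => ih k (Finset.mem_Iio.mp hk)
    have sum_Iic_eq := h i
    rw [← Finset.sum_Iio_add_eq_sum_Iic, ← Finset.sum_Iio_add_eq_sum_Iic, sum_Iio_eq]
      at sum_Iic_eq
    exact add_left_cancel sum_Iic_eq

variable {m R : Type*} [Fintype α] [PartialOrder ι] [DecidableLE ι] [LocallyFiniteOrderBot ι]

theorem mulVec_initialIndicator_apply [NonAssocSemiring R] (A : Matrix m α R) (p : α ≃ ι) (i : ι)
    (v : m) :
    (A *ᵥ initialIndicator R p i) v = ∑ k ∈ Finset.Iic i, A v (p.symm k) := by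
  simp only [mulVec, dotProduct, initialIndicator, mul_ite, mul_one, mul_zero,
    ← Finset.sum_filter]
  exact Finset.sum_equiv p (by simp) (by simp)

theorem matrix_eq_of_mulVec_initialIndicator_eq [NonAssocRing R] [WellFoundedLT ι]
    {A B : Matrix m α R} (p : α ≃ ι)
    (h : ∀ i, A *ᵥ initialIndicator R p i = B *ᵥ initialIndicator R p i) : A = B := by
  ext v j
  have row_eq : (fun k => A v (p.symm k)) = fun k => B v (p.symm k) :=
    eq_of_sum_Iic_eq fun i => by
      simpa only [mulVec_initialIndicator_apply] using congrFun (h i) v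
  simpa using congrFun row_eq (p j)

end InitialSegments

section Laplacian

variable {n : ℕ} {w w' : Fin n → Fin n → ℝ}

theorem graphLaplacian_mulVec_apply (w : Fin n → Fin n → ℝ) (x : Fin n → ℝ) (v : Fin n) :
    (graphLaplacian w *ᵥ x) v = ∑ j, w v j * (x v - x j) := by
  rw [graphLaplacian, sub_mulVec, Pi.sub_apply, mulVec_diagonal]
  simp only [mulVec, dotProduct, of_apply, mul_sub, Finset.sum_sub_distrib, Finset.sum_mul]

theorem graphLaplacian_apply_of_ne (w : Fin n → Fin n → ℝ) {i j : Fin n} (hij : i ≠ j) :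
    graphLaplacian w i j = -w i j := by
  simp [graphLaplacian, hij]

theorem weight_eq_of_graphLaplacian_eq (hw : ∀ i, w i i = 0) (hw' : ∀ i, w' i i = 0)
    (h : graphLaplacian w = graphLaplacian w') : w = w' := by
  ext i j
  obtain rfl | hij := eq_or_ne i j
  · rw [hw, hw']
  · simpa only [graphLaplacian_apply_of_ne _ hij, neg_inj] using congrFun₂ h i j

end Laplacian

section OrderWeight

variable {n : ℕ} {α ι : Type*}

/-- The weights of the dominance graph in which `v` has position `p v`: a unit weight from `v` to
every vertex placed strictly after it. Complete dominance graphs are those with `p` injective. -/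
noncomputable def orderWeight [LT ι] [DecidableLT ι] (p : α → ι) (v j : α) : ℝ :=
  if p v < p j then 1 else 0

theorem orderWeight_self [Preorder ι] [DecidableLT ι] (p : α → ι) (v : α) :
    orderWeight p v v = 0 :=
  if_neg (lt_irrefl _)

theorem orderWeight_pos_iff [LT ι] [DecidableLT ι] {p : α → ι} {v j : α} :
    0 < orderWeight p v j ↔ p v < p j := by
  unfold orderWeight; split_ifs with h <;> simp [h]

theorem orderWeight_eq_one_iff [LT ι] [DecidableLT ι] {p : α → ι} {v j : α} :
    orderWeight p v j = 1 ↔ p v < p j := by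
  simp [orderWeight]

variable [LinearOrder ι]

theorem graphLaplacian_orderWeight_mulVec_initialIndicator (p : Fin n → ι) (i : ι) :
    graphLaplacian (orderWeight p) *ᵥ initialIndicator ℝ p i =
      (Finset.card {j | i < p j} : ℝ) • initialIndicator ℝ p i := by
  funext v
  have edge_term (j : Fin n) :
      orderWeight p v j * (initialIndicator ℝ p i v - initialIndicator ℝ p i j) =
        if p v ≤ i ∧ i < p j then 1 else 0 := by
    simp only [orderWeight, initialIndicator]
    grind
  rw [graphLaplacian_mulVec_apply, Finset.sum_congr rfl fun j _ => edge_term j]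
  by_cases hv : p v ≤ i <;> simp [hv, initialIndicator]

theorem card_filter_lt_perm (p : Equiv.Perm (Fin n)) (i : Fin n) :
    (Finset.card {j | i < p j} : ℝ) = n - 1 - (i : ℕ) := by
  have card_eq : Finset.card {j | i < p j} = n - 1 - i := by
    rw [← Fin.card_Ioi]
    exact Finset.card_equiv p (by simp)
  rw [card_eq, Nat.sub_sub, Nat.cast_sub (by lia)]
  push_cast
  ring

theorem graphLaplacian_mulVec_initialIndicator_iff {w : Fin n → Fin n → ℝ}
    (hdiag : ∀ i, w i i = 0) (p : Equiv.Perm (Fin n)) :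
    (∀ i : Fin n, graphLaplacian w *ᵥ initialIndicator ℝ p i =
      ((n : ℝ) - 1 - (i : ℕ)) • initialIndicator ℝ p i) ↔ w = orderWeight p := by
  simp only [← card_filter_lt_perm p, ← graphLaplacian_orderWeight_mulVec_initialIndicator]
  refine ⟨fun h => ?_, fun h i => by rw [h]⟩
  exact weight_eq_of_graphLaplacian_eq hdiag (orderWeight_self p)
    (matrix_eq_of_mulVec_initialIndicator_eq p h)

end OrderWeight

section Dominance

variable {n : ℕ} {w : Fin n → Fin n → ℝ}

theorem isAcyclic_of_pos_imp_lt {ι : Type*} [Preorder ι] (p : Fin n → ι)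
    (hp : ∀ a b, 0 < w a b → p a < p b) : IsAcyclic w := by
  rintro ⟨k, x, hk, hclosed, hpos⟩
  have strictMonoOn_walk : StrictMonoOn (p ∘ x) (Set.Iic k) :=
    strictMonoOn_Iic_of_lt_succ fun t ht => hp _ _ (hpos t ht)
  have hlt : p (x 0) < p (x k) := strictMonoOn_walk (Nat.zero_le k) Set.self_mem_Iic hk
  exact hlt.ne (by rw [hclosed])

theorem IsAcyclic.not_pos_self (h : IsAcyclic w) (a : Fin n) : ¬ 0 < w a a :=
  fun ha => h ⟨1, fun _ => a, le_rfl, rfl, fun _ _ => ha⟩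

theorem IsAcyclic.not_pos_of_pos_of_pos (h : IsAcyclic w) {a b c : Fin n} (hab : 0 < w a b)
    (hbc : 0 < w b c) : ¬ 0 < w c a := fun hca =>
  h ⟨3, fun t => if t = 1 then b else if t = 2 then c else a, by norm_num, rfl, fun t ht => by
    interval_cases t <;> simpa⟩

theorem isCompleteDominanceGraph_orderWeight {ι : Type*} [LinearOrder ι] {p : Fin n → ι}
    (hp : Function.Injective p) : IsCompleteDominanceGraph (orderWeight p) := by
  refine ⟨fun i j => ?_, fun i j hij => ?_,
    isAcyclic_of_pos_imp_lt p fun _ _ => orderWeight_pos_iff.mp⟩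
  · exact (ite_eq_or_eq _ _ _).symm
  · simp only [orderWeight_eq_one_iff]
    exact (hp.ne hij).lt_or_gt.imp (fun h => ⟨h, h.asymm⟩) (fun h => ⟨h, h.asymm⟩)

theorem IsCompleteDominanceGraph.isStrictTotalOrder (h : IsCompleteDominanceGraph w) :
    IsStrictTotalOrder (Fin n) (fun a b => w a b = 1) := by
  obtain ⟨-, hxor, hacyclic⟩ := h
  have pos_of_eq_one {a b : Fin n} (hab : w a b = 1) : 0 < w a b := hab ▸ one_pos
  have irrefl (a : Fin n) : w a a ≠ 1 := fun ha => hacyclic.not_pos_self a (pos_of_eq_one ha)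
  have eq_or_connected (a b : Fin n) : a = b ∨ w a b = 1 ∨ w b a = 1 :=
    or_iff_not_imp_left.mpr fun hne => Xor.or (hxor a b hne)
  have asymm {a b : Fin n} (hab : w a b = 1) : w b a ≠ 1 := by
    have hne : a ≠ b := by rintro rfl; exact irrefl a hab
    exact (xor_iff_iff_not.mp (hxor a b hne)).mp hab
  have trans (a b c : Fin n) (hab : w a b = 1) (hbc : w b c = 1) : w a c = 1 := by
    obtain rfl | hac | hca := eq_or_connected a c
    · exact absurd hbc (asymm hab)
    · exact hac
    · exact absurd (pos_of_eq_one hca)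
        (hacyclic.not_pos_of_pos_of_pos (pos_of_eq_one hab) (pos_of_eq_one hbc))
  have trichotomous (a b : Fin n) (hab : w a b ≠ 1) (hba : w b a ≠ 1) : a = b :=
    (eq_or_connected a b).resolve_right (not_or.mpr ⟨hab, hba⟩)
  exact { irrefl, trans, trichotomous }

theorem nonempty_relIso_fin_of_isStrictTotalOrder {α : Type*} [Fintype α] (r : α → α → Prop)
    [IsStrictTotalOrder α r] {k : ℕ} (hk : Fintype.card α = k) :
    Nonempty (r ≃r ((· < ·) : Fin k → Fin k → Prop)) := by
  classical
  let := linearOrderOfSTO r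
  exact ⟨(Fintype.orderIsoFinOfCardEq α hk).symm.toRelIsoLT⟩

theorem isCompleteDominanceGraph_iff_exists_eq_orderWeight :
    IsCompleteDominanceGraph w ↔ ∃ p : Equiv.Perm (Fin n), w = orderWeight p := by
  constructor
  · intro h
    have := h.isStrictTotalOrder
    obtain ⟨p⟩ := nonempty_relIso_fin_of_isStrictTotalOrder (fun a b => w a b = 1)
      (Fintype.card_fin n)
    refine ⟨p.toEquiv, ?_⟩
    ext a b
    have edge_iff : p a < p b ↔ w a b = 1 := p.map_rel_iff
    obtain hab | hab := h.1 a b <;> simp [orderWeight, edge_iff, hab]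
  · rintro ⟨p, rfl⟩
    exact isCompleteDominanceGraph_orderWeight p.injective

end Dominance

theorem completeDominance_iff_eigenvectors_general {n : ℕ} {w : Fin n → Fin n → ℝ}
    (hdiag : ∀ i, w i i = 0) :
    IsCompleteDominanceGraph w ↔
      ∃ σ : Equiv.Perm (Fin n), ∀ i : Fin n,
        graphLaplacian w *ᵥ initialIndicator ℝ σ.symm i =
          ((n : ℝ) - 1 - (i : ℕ)) • initialIndicator ℝ σ.symm i := by
  simp only [graphLaplacian_mulVec_initialIndicator_iff hdiag,
    isCompleteDominanceGraph_iff_exists_eq_orderWeight]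
  exact ⟨fun ⟨p, hp⟩ => ⟨p.symm, hp⟩, fun ⟨σ, hσ⟩ => ⟨σ.symm, hσ⟩⟩

/-- Eigenvector characterization of complete dominance graphs: a weighted digraph with
weights in `[0, 1]` is a complete dominance graph if and only if there is an ordering of
the vertices for which each partial-sum 0/1 vector `x_i` (with ones on the first `i + 1`
vertices of the ordering) is an eigenvector of the Laplacian for the eigenvalue
`n - 1 - i`. -/
theorem completeDominance_iff_eigenvectors (n : ℕ) (hn : 1 ≤ n)
    (w : Fin n → Fin n → ℝ) (hw0 : ∀ i j, 0 ≤ w i j) (hw1 : ∀ i j, w i j ≤ 1)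
    (hdiag : ∀ i, w i i = 0) :
    IsCompleteDominanceGraph w ↔
      ∃ σ : Equiv.Perm (Fin n), ∀ i : Fin n,
        graphLaplacian w *ᵥ (fun v => if σ.symm v ≤ i then (1 : ℝ) else 0)
          = ((n : ℝ) - 1 - (i : ℕ)) • (fun v => if σ.symm v ≤ i then (1 : ℝ) else 0) :=
  completeDominance_iff_eigenvectors_general hdiag
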